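/- Fix n ≥ 4 and let H_n be the real linear span of the set of U-centered matrices Ã of Euclidean distance matrices A = (|x_i − x_j|) of n-point samples x₁,…,xₙ ∈ ℝ^p, over all dimensions p ≥ 1 and all samples. Then for every H ∈ H_n there exist points v₁,…,vₙ in a Euclidean space of dimension at most n−2 (in particular, one may take v₁,…,vₙ ∈ ℝ^{n−2}) such that the U-centered matrix of the Euclidean distance matrix (|v_i − v_j|) is exactly equal to H. -/

import Mathlib

/-- The U-centered matrix of an `n × n` real matrix `A`. -/
noncomputable def Ucenter {n : ℕ} (A : Matrix (Fin n) (Fin n) ℝ) :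
    Matrix (Fin n) (Fin n) ℝ :=
  Matrix.of fun i j =>
    if i = j then 0
    else A i j - (∑ l, A i l) / ((n : ℝ) - 2) - (∑ k, A k j) / ((n : ℝ) - 2)
      + (∑ k, ∑ l, A k l) / (((n : ℝ) - 1) * ((n : ℝ) - 2))

/-- The linear span of all U-centered distance matrices of `n`-point samples
in Euclidean spaces of all dimensions `p ≥ 1`. -/
noncomputable def Hn (n : ℕ) : Submodule ℝ (Matrix (Fin n) (Fin n) ℝ) :=
  Submodule.span ℝ {M | ∃ p : ℕ, 1 ≤ p ∧ ∃ x : Fin n → EuclideanSpace ℝ (Fin p),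
    M = Ucenter (Matrix.of fun i j => dist (x i) (x j))}

open Topology Filter

/-- The quadratic form attached to the entrywise square of a matrix of distances; on vectors
with zero sum it is nonnegative exactly when the distances are Euclidean. -/
noncomputable def distForm {n : ℕ} (D : Matrix (Fin n) (Fin n) ℝ) (u : Fin n → ℝ) : ℝ :=
  -∑ i, ∑ j, D i j ^ 2 * (u i * u j)

/-- The matrix `H` with the constant `c` added to its off-diagonal entries and zero diagonal. -/
noncomputable def addOffDiag {n : ℕ} (H : Matrix (Fin n) (Fin n) ℝ) (c : ℝ) :
    Matrix (Fin n) (Fin n) ℝ :=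
  Matrix.of fun i j => if i = j then 0 else c + H i j

lemma exists_linearIsometry_of_finrank_le {V : Type*} [NormedAddCommGroup V]
    [InnerProductSpace ℝ V] [FiniteDimensional ℝ V] {m : ℕ} (h : Module.finrank ℝ V ≤ m) :
    Nonempty (V →ₗᵢ[ℝ] EuclideanSpace ℝ (Fin m)) := by
  let b := stdOrthonormalBasis ℝ V
  let e := EuclideanSpace.basisFun (Fin m) ℝ
  have he : Orthonormal ℝ (e ∘ Fin.castLE h) :=
    e.orthonormal.comp _ (Fin.castLE_injective h)
  let f : V →ₗ[ℝ] EuclideanSpace ℝ (Fin m) := b.toBasis.constr ℝ (e ∘ Fin.castLE h)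
  refine ⟨f.isometryOfOrthonormal (v := b.toBasis) (by simp [b.orthonormal]) ?_⟩
  have : f ∘ b.toBasis = e ∘ Fin.castLE h := by
    ext1 i
    simp only [f, Function.comp_apply, Module.Basis.constr_basis]
  rwa [this]

open scoped MatrixOrder in
lemma exists_dist_eq_of_distForm_nonneg {n : ℕ} (D : Matrix (Fin n) (Fin n) ℝ)
    (hsymm : ∀ i j, D i j = D j i) (hdiag : ∀ i, D i i = 0) (hnonneg : ∀ i j, 0 ≤ D i j)
    (hform : ∀ u : Fin n → ℝ, ∑ i, u i = 0 → 0 ≤ distForm D u)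
    {w : Fin n → ℝ} (hw : w ≠ 0) (hwsum : ∑ i, w i = 0) (hwform : distForm D w = 0) :
    ∃ v : Fin n → EuclideanSpace ℝ (Fin (n - 2)), ∀ i j, dist (v i) (v j) = D i j := by
  obtain ⟨o, -⟩ : ∃ o, w o ≠ 0 := Function.ne_iff.mp hw
  let G : Matrix (Fin n) (Fin n) ℝ :=
    Matrix.of fun i j => (D i o ^ 2 + D j o ^ 2 - D i j ^ 2) / 2
  have hG (x : Fin n → ℝ) :
      ∑ i, ∑ j, x i * x j * G i j = distForm D (x - (∑ i, x i) • Pi.single o 1) / 2 := by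
    have h1 : ∑ i, ∑ j, x i * x j * G i j =
        (∑ i, D i o ^ 2 * x i) * (∑ i, x i) - (∑ i, ∑ j, D i j ^ 2 * (x i * x j)) / 2 := by
      have e1 : ∑ i, ∑ j, x i * x j * D i o ^ 2 = (∑ i, D i o ^ 2 * x i) * (∑ i, x i) := by
        rw [Finset.sum_mul_sum]
        exact Finset.sum_congr rfl fun i _ => Finset.sum_congr rfl fun j _ => by ring
      have e2 : ∑ i, ∑ j, x i * x j * D j o ^ 2 = (∑ i, D i o ^ 2 * x i) * (∑ i, x i) := by
        rw [mul_comm, Finset.sum_mul_sum]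
        exact Finset.sum_congr rfl fun i _ => Finset.sum_congr rfl fun j _ => by ring
      have e3 : ∑ i, ∑ j, x i * x j * G i j = (∑ i, ∑ j, x i * x j * D i o ^ 2
          + ∑ i, ∑ j, x i * x j * D j o ^ 2 - ∑ i, ∑ j, D i j ^ 2 * (x i * x j)) / 2 := by
        simp only [← Finset.sum_add_distrib, ← Finset.sum_sub_distrib, Finset.sum_div]
        refine Finset.sum_congr rfl fun i _ => Finset.sum_congr rfl fun j _ => ?_
        simp only [G, Matrix.of_apply]
        ring
      rw [e3, e1, e2]
      ring
    have h2 : distForm D (x - (∑ i, x i) • Pi.single o 1) =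
        2 * ((∑ i, D i o ^ 2 * x i) * (∑ i, x i)) - ∑ i, ∑ j, D i j ^ 2 * (x i * x j) := by
      set s := ∑ i, x i
      have e1 (i j : Fin n) : D i j ^ 2 * ((x - s • (Pi.single o 1 : Fin n → ℝ)) i *
            (x - s • (Pi.single o 1 : Fin n → ℝ)) j)
          = D i j ^ 2 * (x i * x j) - (if i = o then s * (D i j ^ 2 * x j) else 0)
            - (if j = o then s * (D i j ^ 2 * x i) else 0)
            + (if i = o then (if j = o then s ^ 2 * D i j ^ 2 else 0) else 0) := by
        by_cases hi : i = o <;> by_cases hj : j = o <;>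
          simp [hi, hj] <;> ring
      simp only [distForm, e1, Finset.sum_add_distrib, Finset.sum_sub_distrib]
      have e2 : ∑ i, ∑ j, (if i = o then s * (D i j ^ 2 * x j) else 0)
          = s * ∑ i, D i o ^ 2 * x i := by
        rw [Finset.sum_comm]
        simp [Finset.mul_sum, hsymm o]
      have e3 : ∑ i, ∑ j, (if j = o then s * (D i j ^ 2 * x i) else 0)
          = s * ∑ i, D i o ^ 2 * x i := by
        simp [Finset.mul_sum]
      have e4 : ∑ i, ∑ j, (if i = o then (if j = o then s ^ 2 * D i j ^ 2 else 0) else 0)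
          = 0 := by
        rw [Finset.sum_comm]
        simp [hdiag]
      rw [e2, e3, e4]
      ring
    rw [h1, h2]
    ring
  have hGpos : G.PosSemidef := by
    refine Matrix.PosSemidef.of_dotProduct_mulVec_nonneg ?_ fun x => ?_
    · ext i j
      simp [G, hsymm i j, add_comm]
    · have h0 : star x ⬝ᵥ G.mulVec x = ∑ i, ∑ j, x i * x j * G i j := by
        simp only [dotProduct, Matrix.mulVec, Finset.mul_sum, Pi.star_apply, star_trivial]
        exact Finset.sum_congr rfl fun i _ => Finset.sum_congr rfl fun j _ => by ring
      rw [h0, hG]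
      have := hform (x - (∑ i, x i) • Pi.single o 1) (by simp [← Finset.mul_sum])
      positivity
  obtain ⟨B, hB⟩ := CStarAlgebra.nonneg_iff_eq_star_mul_self.mp hGpos.nonneg
  let b : Fin n → EuclideanSpace ℝ (Fin n) := fun i => WithLp.toLp 2 fun k => B k i
  have hb (i j : Fin n) : inner ℝ (b i) (b j) = G i j := by
    rw [hB]
    simp [b, Matrix.star_eq_conjTranspose, PiLp.inner_apply, Matrix.mul_apply, mul_comm]
  let f : (Fin n → ℝ) →ₗ[ℝ] EuclideanSpace ℝ (Fin n) := Fintype.linearCombination ℝ b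
  have hf (x : Fin n → ℝ) : inner ℝ (f x) (f x) = ∑ i, ∑ j, x i * x j * G i j := by
    simp only [f, Fintype.linearCombination_apply, sum_inner, inner_sum, real_inner_smul_left,
      real_inner_smul_right, hb]
    rw [Finset.sum_comm]
    exact Finset.sum_congr rfl fun i _ => Finset.sum_congr rfl fun j _ => by ring
  have hfw : f w = 0 := by
    rw [← inner_self_eq_zero (𝕜 := ℝ), hf, hG, hwsum]
    simp [hwform]
  have hfo : f (Pi.single o 1) = 0 := by
    rw [← inner_self_eq_zero (𝕜 := ℝ), hf, hG]
    simp [distForm]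
  have hli : LinearIndependent ℝ ![w, Pi.single o 1] := by
    rw [LinearIndependent.pair_iff]
    intro s t hst
    have ht : t = 0 := by
      have := congrArg (fun g : Fin n → ℝ => ∑ i, g i) hst
      simpa [Finset.sum_add_distrib, ← Finset.mul_sum, hwsum] using this
    subst ht
    simpa [hw] using hst
  have hker : 2 ≤ Module.finrank ℝ (LinearMap.ker f) := by
    have hle : Submodule.span ℝ (Set.range ![w, Pi.single o 1]) ≤ LinearMap.ker f := by
      rw [Submodule.span_le]
      rintro _ ⟨i, rfl⟩
      fin_cases i
      · exact hfw
      · exact hfo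
    have := Submodule.finrank_mono hle
    rwa [finrank_span_eq_card hli, Fintype.card_fin] at this
  have hrange : Module.finrank ℝ (LinearMap.range f) ≤ n - 2 := by
    have := f.finrank_range_add_finrank_ker
    rw [Module.finrank_fin_fun] at this
    omega
  obtain ⟨g⟩ := exists_linearIsometry_of_finrank_le hrange
  refine ⟨fun i => g (f.rangeRestrict (Pi.single i 1)), fun i j => ?_⟩
  have hfi (i : Fin n) : f (Pi.single i 1) = b i := by
    simp [f]
  have hsq : dist (b i) (b j) ^ 2 = D i j ^ 2 := by
    rw [dist_eq_norm, norm_sub_sq_real, ← real_inner_self_eq_norm_sq, ← real_inner_self_eq_norm_sq,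
      hb, hb, hb]
    simp only [G, Matrix.of_apply, hdiag]
    ring
  rw [g.dist_map, Subtype.dist_eq]
  change dist (f (Pi.single i 1)) (f (Pi.single j 1)) = D i j
  rw [hfi, hfi]
  exact (sq_eq_sq₀ dist_nonneg (hnonneg i j)).mp hsq

/-- Unit vectors with zero coordinate sum. -/
def zeroSumSphere (n : ℕ) : Set (Fin n → ℝ) :=
  {u | ∑ i, u i = 0 ∧ ∑ i, u i ^ 2 = 1}

lemma isCompact_zeroSumSphere (n : ℕ) : IsCompact (zeroSumSphere n) := by
  refine Metric.isCompact_of_isClosed_isBounded ?_ ?_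
  · exact (isClosed_eq (by fun_prop) continuous_const).inter
      (isClosed_eq (by fun_prop) continuous_const)
  · refine (Metric.isBounded_closedBall (x := 0) (r := 1)).subset fun u hu => ?_
    rw [mem_closedBall_zero_iff, pi_norm_le_iff_of_nonneg zero_le_one]
    intro i
    rw [Real.norm_eq_abs, ← sq_le_one_iff_abs_le_one, ← hu.2]
    exact Finset.single_le_sum (f := fun i => u i ^ 2) (fun _ _ => sq_nonneg _)
      (Finset.mem_univ i)

lemma distForm_smul {n : ℕ} (D : Matrix (Fin n) (Fin n) ℝ) (a : ℝ) (u : Fin n → ℝ) :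
    distForm D (a • u) = a ^ 2 * distForm D u := by
  simp only [distForm, mul_neg, Finset.mul_sum, Pi.smul_apply, smul_eq_mul]
  congr 1
  exact Finset.sum_congr rfl fun i _ => Finset.sum_congr rfl fun j _ => by ring

lemma smul_distForm {n : ℕ} (D : Matrix (Fin n) (Fin n) ℝ) (a : ℝ) (u : Fin n → ℝ) :
    distForm (a • D) u = a ^ 2 * distForm D u := by
  simp only [distForm, mul_neg, Finset.mul_sum, Matrix.smul_apply, smul_eq_mul]
  congr 1
  exact Finset.sum_congr rfl fun i _ => Finset.sum_congr rfl fun j _ => by ring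

lemma exists_smul_mem_zeroSumSphere {n : ℕ} {u : Fin n → ℝ} (hu : u ≠ 0) (hsum : ∑ i, u i = 0) :
    ∃ a : ℝ, a ≠ 0 ∧ a • u ∈ zeroSumSphere n := by
  have hpos : 0 < ∑ i, u i ^ 2 := by
    obtain ⟨i, hi⟩ := Function.ne_iff.mp hu
    exact Finset.sum_pos' (fun _ _ => sq_nonneg _) ⟨i, Finset.mem_univ i, sq_pos_of_ne_zero hi⟩
  refine ⟨(√(∑ i, u i ^ 2))⁻¹, by positivity, ?_, ?_⟩
  · simp [← Finset.mul_sum, hsum]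
  · simp only [Pi.smul_apply, smul_eq_mul, mul_pow, ← Finset.mul_sum, inv_pow]
    rw [Real.sq_sqrt hpos.le, inv_mul_cancel₀ hpos.ne']

lemma distForm_nonneg_of_forall_zeroSumSphere {n : ℕ} {D : Matrix (Fin n) (Fin n) ℝ}
    (h : ∀ u ∈ zeroSumSphere n, 0 < distForm D u) (u : Fin n → ℝ) (hsum : ∑ i, u i = 0) :
    0 ≤ distForm D u := by
  rcases eq_or_ne u 0 with rfl | hu
  · simp [distForm]
  · obtain ⟨a, -, hmem⟩ := exists_smul_mem_zeroSumSphere hu hsum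
    have := h _ hmem
    rw [distForm_smul] at this
    exact (pos_of_mul_pos_right this (sq_nonneg a)).le

lemma eventually_distForm_pos {n : ℕ} {D : ℝ → Matrix (Fin n) (Fin n) ℝ}
    (hD : ∀ i j, Continuous fun t => D t i j) {t₀ : ℝ}
    (h : ∀ u ∈ zeroSumSphere n, 0 < distForm (D t₀) u) :
    ∀ᶠ t in 𝓝 t₀, ∀ u ∈ zeroSumSphere n, 0 < distForm (D t) u := by
  refine (isCompact_zeroSumSphere n).eventually_forall_of_forall_eventually fun u hu => ?_
  have hc : Continuous fun z : ℝ × (Fin n → ℝ) => distForm (D z.1) z.2 := by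
    unfold distForm
    fun_prop
  exact hc.continuousAt.eventually (lt_mem_nhds (h u hu))

lemma exists_addOffDiag_distForm_nonneg {n : ℕ} (H : Matrix (Fin n) (Fin n) ℝ) :
    ∃ c : ℝ, (∀ i j, i ≠ j → 0 ≤ c + H i j) ∧
      ∀ u : Fin n → ℝ, ∑ i, u i = 0 → 0 ≤ distForm (addOffDiag H c) u := by
  let D : ℝ → Matrix (Fin n) (Fin n) ℝ := fun t => addOffDiag (t • H) 1
  have hD (i j : Fin n) : Continuous fun t => D t i j := by
    simp only [D, addOffDiag, Matrix.of_apply, Matrix.smul_apply, smul_eq_mul]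
    split_ifs <;> fun_prop
  have h0 : ∀ u ∈ zeroSumSphere n, 0 < distForm (D 0) u := by
    intro u hu
    have e : ∀ i j, D 0 i j ^ 2 * (u i * u j) = u i * u j - if i = j then u i * u j else 0 := by
      intro i j
      by_cases hij : i = j <;> simp [D, addOffDiag, hij]
    have : distForm (D 0) u = 1 := by
      simp only [distForm, e, Finset.sum_sub_distrib]
      rw [← Finset.sum_mul_sum, hu.1]
      simp [← pow_two, hu.2]
    rw [this]
    exact one_pos
  have hnn : ∀ᶠ t in 𝓝 (0 : ℝ), ∀ i j, 0 < 1 + t * H i j := by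
    refine eventually_all.mpr fun i => eventually_all.mpr fun j => ?_
    have hc : Continuous fun t : ℝ => 1 + t * H i j := by fun_prop
    exact hc.continuousAt.eventually (lt_mem_nhds (by simp))
  have hev := ((eventually_distForm_pos hD h0).and hnn).filter_mono
    (nhdsWithin_le_nhds (s := Set.Ioi 0))
  obtain ⟨t, ⟨ht1, ht2⟩, ht⟩ := (hev.and self_mem_nhdsWithin).exists
  have ht : 0 < t := ht
  refine ⟨t⁻¹, fun i j _ => ?_, fun u hu => ?_⟩
  · have : t⁻¹ + H i j = t⁻¹ * (1 + t * H i j) := by field_simp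
    rw [this]
    exact mul_nonneg (inv_nonneg.mpr ht.le) (ht2 i j).le
  · have : addOffDiag H t⁻¹ = t⁻¹ • D t := by
      ext i j
      by_cases hij : i = j
      · simp [D, addOffDiag, hij]
      · simp only [D, addOffDiag, Matrix.of_apply, Matrix.smul_apply, smul_eq_mul, hij, if_false]
        field_simp
    rw [this, smul_distForm]
    exact mul_nonneg (sq_nonneg _) (distForm_nonneg_of_forall_zeroSumSphere ht1 u hu)

lemma distForm_single_sub_single {n : ℕ} {D : Matrix (Fin n) (Fin n) ℝ}
    (hsymm : ∀ i j, D i j = D j i) (hdiag : ∀ i, D i i = 0) (i j : Fin n) :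
    distForm D (Pi.single i 1 - Pi.single j 1) = 2 * D i j ^ 2 := by
  simp only [distForm, Pi.sub_apply, mul_sub, sub_mul, Finset.sum_sub_distrib, Pi.single_apply]
  simp [hdiag, hsymm j i]
  ring

/-- A smallest admissible additive constant makes the distance form degenerate. -/
lemma exists_addOffDiag_distForm_degenerate {n : ℕ} (hn : 2 ≤ n) {H : Matrix (Fin n) (Fin n) ℝ}
    (hsymm : ∀ i j, H i j = H j i) :
    ∃ c : ℝ, (∀ i j, i ≠ j → 0 ≤ c + H i j) ∧
      (∀ u : Fin n → ℝ, ∑ i, u i = 0 → 0 ≤ distForm (addOffDiag H c) u) ∧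
      ∃ w ∈ zeroSumSphere n, distForm (addOffDiag H c) w = 0 := by
  let S : Set ℝ := {c | (∀ i j, i ≠ j → 0 ≤ c + H i j) ∧
      ∀ u : Fin n → ℝ, ∑ i, u i = 0 → 0 ≤ distForm (addOffDiag H c) u}
  have hD (i j : Fin n) : Continuous fun c => addOffDiag H c i j := by
    simp only [addOffDiag, Matrix.of_apply]
    split_ifs <;> fun_prop
  have hne : S.Nonempty := exists_addOffDiag_distForm_nonneg H
  have hcl : IsClosed S := by
    simp only [S, Set.ofPred_and, Set.ofPred_forall]
    refine IsClosed.inter ?_ ?_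
    · exact isClosed_iInter fun i => isClosed_iInter fun j => isClosed_iInter fun _ =>
        isClosed_le continuous_const (by fun_prop)
    · exact isClosed_iInter fun u => isClosed_iInter fun _ =>
        isClosed_le continuous_const (by unfold distForm; fun_prop)
  have hbdd : BddBelow S := by
    refine ⟨-H ⟨0, by omega⟩ ⟨1, by omega⟩, fun c hc => ?_⟩
    have := hc.1 ⟨0, by omega⟩ ⟨1, by omega⟩ (by simp)
    linarith
  have hmem : sInf S ∈ S := hcl.csInf_mem hne hbdd
  refine ⟨sInf S, hmem.1, hmem.2, ?_⟩
  by_contra! hcon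
  have hpos : ∀ u ∈ zeroSumSphere n, 0 < distForm (addOffDiag H (sInf S)) u :=
    fun u hu => lt_of_le_of_ne (hmem.2 u hu.1) (hcon u hu).symm
  have hentry (i j : Fin n) (hij : i ≠ j) : 0 < sInf S + H i j := by
    refine lt_of_le_of_ne (hmem.1 i j hij) fun h => ?_
    have hsum : ∑ k, (Pi.single i 1 - Pi.single j 1 : Fin n → ℝ) k = 0 := by simp
    have hne0 : (Pi.single i 1 - Pi.single j 1 : Fin n → ℝ) ≠ 0 := fun h0 => by
      have := congrFun h0 i
      simp [hij] at this
    obtain ⟨a, -, ha⟩ := exists_smul_mem_zeroSumSphere hne0 hsum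
    refine hcon _ ha ?_
    rw [distForm_smul, distForm_single_sub_single]
    · simp [addOffDiag, hij, ← h]
    · intro k l
      simp [addOffDiag, hsymm k l, eq_comm]
    · simp [addOffDiag]
  have hentry' : ∀ᶠ c in 𝓝 (sInf S), ∀ i j, i ≠ j → 0 < c + H i j := by
    refine eventually_all.mpr fun i => eventually_all.mpr fun j =>
      eventually_imp_distrib_left.mpr fun hij => ?_
    have hc : Continuous fun c : ℝ => c + H i j := by fun_prop
    exact hc.continuousAt.eventually (lt_mem_nhds (hentry i j hij))
  have hev := ((eventually_distForm_pos hD hpos).and hentry').filter_mono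
    (nhdsWithin_le_nhds (s := Set.Iio (sInf S)))
  obtain ⟨c, ⟨hc1, hc2⟩, hc⟩ := (hev.and self_mem_nhdsWithin).exists
  exact notMem_of_lt_csInf hc hbdd
    ⟨fun i j hij => (hc2 i j hij).le, distForm_nonneg_of_forall_zeroSumSphere hc1⟩

lemma Ucenter_symm {n : ℕ} {A : Matrix (Fin n) (Fin n) ℝ} (hA : ∀ i j, A i j = A j i)
    (i j : Fin n) : Ucenter A i j = Ucenter A j i := by
  by_cases hij : i = j
  · rw [hij]
  · have hcol (k : Fin n) : ∑ l, A l k = ∑ l, A k l := Finset.sum_congr rfl fun l _ => hA l k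
    simp only [Ucenter, Matrix.of_apply, hij, Ne.symm hij, if_false, hcol]
    rw [hA i j]
    ring

lemma Ucenter_row_sum {n : ℕ} (hn : 3 ≤ n) {A : Matrix (Fin n) (Fin n) ℝ}
    (hA : ∀ i j, A i j = A j i) (hdiag : ∀ i, A i i = 0) (i : Fin n) :
    ∑ j, Ucenter A i j = 0 := by
  have hn' : (3 : ℝ) ≤ n := by exact_mod_cast hn
  have h1 : (n : ℝ) - 1 ≠ 0 := by linarith
  have h2 : (n : ℝ) - 2 ≠ 0 := by linarith
  have key (j : Fin n) : Ucenter A i j =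
      (A i j - (∑ l, A i l) / ((n : ℝ) - 2) - (∑ k, A j k) / ((n : ℝ) - 2)
        + (∑ k, ∑ l, A k l) / (((n : ℝ) - 1) * ((n : ℝ) - 2)))
      - if i = j then (- (∑ l, A i l) / ((n : ℝ) - 2) - (∑ k, A i k) / ((n : ℝ) - 2)
        + (∑ k, ∑ l, A k l) / (((n : ℝ) - 1) * ((n : ℝ) - 2))) else 0 := by
    by_cases hij : i = j
    · subst hij
      simp [Ucenter, hdiag]
      ring
    · simp [Ucenter, hij, hA _ j]
  simp only [key, Finset.sum_sub_distrib, Finset.sum_add_distrib, Finset.sum_ite_eq,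
    Finset.mem_univ, if_true, ← Finset.sum_div, Finset.sum_const, Finset.card_univ,
    Fintype.card_fin, nsmul_eq_mul]
  field_simp
  ring

lemma Ucenter_addOffDiag {n : ℕ} (hn : 3 ≤ n) {H : Matrix (Fin n) (Fin n) ℝ}
    (hsymm : ∀ i j, H i j = H j i) (hdiag : ∀ i, H i i = 0) (hrow : ∀ i, ∑ j, H i j = 0)
    (c : ℝ) : Ucenter (addOffDiag H c) = H := by
  have hn' : (3 : ℝ) ≤ n := by exact_mod_cast hn
  have h1 : (n : ℝ) - 1 ≠ 0 := by linarith
  have h2 : (n : ℝ) - 2 ≠ 0 := by linarith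
  have hsym' (i j : Fin n) : addOffDiag H c i j = addOffDiag H c j i := by
    simp [addOffDiag, hsymm i j, eq_comm]
  have hsum (i : Fin n) : ∑ j, addOffDiag H c i j = (n - 1) * c := by
    have e (j : Fin n) : addOffDiag H c i j = c + H i j - if i = j then c else 0 := by
      by_cases hij : i = j
      · subst hij
        simp [addOffDiag, hdiag]
      · simp [addOffDiag, hij]
    simp only [e, Finset.sum_sub_distrib, Finset.sum_add_distrib, hrow]
    simp
    ring
  ext i j
  by_cases hij : i = j
  · subst hij
    simp [Ucenter, hdiag]
  · simp only [Ucenter, Matrix.of_apply, hij, if_false, hsym' _ j, hsum]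
    simp only [addOffDiag, Matrix.of_apply, Ne.symm hij, if_false, hsymm j i, Finset.sum_const,
      Finset.card_univ, Fintype.card_fin, nsmul_eq_mul]
    field_simp
    ring

lemma Hn_symm_diag_row_sum {n : ℕ} (hn : 3 ≤ n) {H : Matrix (Fin n) (Fin n) ℝ} (hH : H ∈ Hn n) :
    (∀ i j, H i j = H j i) ∧ (∀ i, H i i = 0) ∧ ∀ i, ∑ j, H i j = 0 := by
  induction hH using Submodule.span_induction with
  | mem M hM =>
    obtain ⟨p, -, x, rfl⟩ := hM
    exact ⟨Ucenter_symm fun i j => dist_comm (x i) (x j), fun i => by simp [Ucenter],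
      Ucenter_row_sum hn (fun i j => dist_comm (x i) (x j)) fun i => dist_self (x i)⟩
  | zero => simp
  | add A B _ _ hA hB =>
    exact ⟨fun i j => by simp [hA.1 i j, hB.1 i j], fun i => by simp [hA.2.1, hB.2.1],
      fun i => by simp [Finset.sum_add_distrib, hA.2.2, hB.2.2]⟩
  | smul a A _ hA =>
    exact ⟨fun i j => by simp [hA.1 i j], fun i => by simp [hA.2.1],
      fun i => by simp [← Finset.mul_sum, hA.2.2]⟩

/-- Every element of the Hilbert space `H_n` is the U-centered distance matrix of
some sample of `n` points in a Euclidean space of dimension at most `n − 2`. -/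
theorem Hn_euclidean_representation {n : ℕ} (hn : 4 ≤ n)
    (H : Matrix (Fin n) (Fin n) ℝ) (hH : H ∈ Hn n) :
    ∃ v : Fin n → EuclideanSpace ℝ (Fin (n - 2)),
      Ucenter (Matrix.of fun i j => dist (v i) (v j)) = H := by
  obtain ⟨hsymm, hdiag, hrow⟩ := Hn_symm_diag_row_sum (by omega) hH
  obtain ⟨c, hc, hform, w, hw, hw0⟩ :=
    exists_addOffDiag_distForm_degenerate (by omega : 2 ≤ n) hsymm
  have hwne : w ≠ 0 := by
    rintro rfl
    simpa using hw.2
  obtain ⟨v, hv⟩ := exists_dist_eq_of_distForm_nonneg (addOffDiag H c)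
    (fun i j => by simp [addOffDiag, hsymm i j, eq_comm]) (fun i => by simp [addOffDiag])
    (fun i j => by
      by_cases hij : i = j
      · simp [addOffDiag, hij]
      · simpa [addOffDiag, hij] using hc i j hij)
    hform hwne hw.1 hw0
  refine ⟨v, ?_⟩
  simp only [hv]
  exact Ucenter_addOffDiag (by omega) hsymm hdiag hrow c
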